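/- arXiv:2110.06174 — 3 statements merged into one kernel-verified Lean document; each statement's English description precedes it below -/
import Mathlib

section
/- Let Γ : ℝ⁶ → ℝ be a twice continuously differentiable Hamiltonian satisfying Γ(S_f x) = Γ(x) and Γ(S_r x) = Γ(x) for all x, and let γ be a 12τ-periodic solution of ẋ = J∇Γ(x) (τ > 0) satisfying γ(s + 2τ) = S_f γ(s) and γ(−s + 2τ) = S_r γ(s) for all s. Let Y : ℝ → M₆(ℝ) satisfy Y′(s) = J·D²Γ(γ(s))·Y(s) with Y(0) = Y₀ invertible, and set B = Y(τ) and W = Y₀⁻¹ S_fᵀ S_r Y₀ B⁻¹ S_r B. Then the monodromy matrix satisfies X(12τ) = Y₀ W⁶ Y₀⁻¹, where X is the solution of the same linear matrix equation with X(0) = I. -/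
open Matrix

/-- The standard `6 × 6` symplectic matrix `J = [[0, I],[−I, 0]]` with `3 × 3` blocks. -/
def J6 : Matrix (Fin 6) (Fin 6) ℝ :=
  !![0, 0, 0, 1, 0, 0;
     0, 0, 0, 0, 1, 0;
     0, 0, 0, 0, 0, 1;
     -1, 0, 0, 0, 0, 0;
     0, -1, 0, 0, 0, 0;
     0, 0, -1, 0, 0, 0]

/-- The time-preserving symmetry matrix `S_f = diag(R, R)`, `R = [[0,0,1],[−1,0,0],[0,1,0]]`. -/
def Sf : Matrix (Fin 6) (Fin 6) ℝ :=
  !![0, 0, 1, 0, 0, 0;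
     -1, 0, 0, 0, 0, 0;
     0, 1, 0, 0, 0, 0;
     0, 0, 0, 0, 0, 1;
     0, 0, 0, -1, 0, 0;
     0, 0, 0, 0, 1, 0]

/-- The time-reversing symmetry matrix `S_r = diag(S, −S)`, `S = [[0,1,0],[1,0,0],[0,0,1]]`. -/
def Sr : Matrix (Fin 6) (Fin 6) ℝ :=
  !![0, 1, 0, 0, 0, 0;
     1, 0, 0, 0, 0, 0;
     0, 0, 1, 0, 0, 0;
     0, 0, 0, 0, -1, 0;
     0, 0, 0, -1, 0, 0;
     0, 0, 0, 0, 0, -1]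

/-- The gradient of `f : ℝ⁶ → ℝ` at `x`, componentwise via the Fréchet derivative. -/
noncomputable def gradV (f : (Fin 6 → ℝ) → ℝ) (x : Fin 6 → ℝ) : Fin 6 → ℝ :=
  fun i => fderiv ℝ f x (Pi.single i 1)

/-- The Hessian matrix `D²f(x)` of `f : ℝ⁶ → ℝ` at `x`. -/
noncomputable def hessM (f : (Fin 6 → ℝ) → ℝ) (x : Fin 6 → ℝ) : Matrix (Fin 6) (Fin 6) ℝ :=
  Matrix.of fun i j => fderiv ℝ (fun y => fderiv ℝ f y (Pi.single j 1)) x (Pi.single i 1)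

/-!
Uniqueness for the linear equation turns each symmetry of its coefficient into an identity between
solutions. If `F A(s + 2τ) = A(s) F`, then `F Y(s + 2τ)` solves the same equation as `Y`, so
`F Y(s + 2τ) = Y(s) W` with the constant `W = Y(0)⁻¹ F Y(2τ)`, and iterating gives
`Fⁿ Y(2nτ) = Y(0) Wⁿ`. A time-reversing symmetry likewise expresses `Y(2τ)` through `Y(τ)`: it is
evaluated at the midpoint `s = τ`, which `s ↦ 2τ - s` fixes. For the variational equation of a
Hamiltonian system the symmetries of the coefficient `J D²Γ(γ(s))` come from the chain rule
`D²Γ(x) = Sᵀ D²Γ(S x) S` for `Γ ∘ S = Γ`.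
-/

section LinearEquation

variable {𝔸 : Type*} [NormedRing 𝔸] [NormedAlgebra ℝ 𝔸] {A X Y Z : ℝ → 𝔸}

/-- `X` solves the linear equation `X' = A X` on all of `ℝ`. The values lie in a normed algebra, so
that matrix solutions are covered once a submultiplicative norm is chosen. -/
def IsLinearSolution (A X : ℝ → 𝔸) : Prop :=
  ∀ s, HasDerivAt X (A s * X s) s

namespace IsLinearSolution

theorem mul_const (hX : IsLinearSolution A X) (C : 𝔸) :
    IsLinearSolution A fun s => X s * C := fun s => by
  simpa only [mul_assoc] using (hX s).mul_const C

theorem const_mul_comp_affine {G : 𝔸} {c T : ℝ} (hX : IsLinearSolution A X)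
    (hG : ∀ s, c • (G * A (c * s + T)) = A s * G) :
    IsLinearSolution A fun s => G * X (c * s + T) := fun s => by
  have hφ : HasDerivAt (fun u : ℝ => c * u + T) c s := by
    simpa only [mul_one, id] using ((hasDerivAt_id s).const_mul c).add_const T
  have hderiv := ((hX (c * s + T)).scomp s hφ).const_mul G
  rwa [mul_smul_comm, ← mul_assoc, ← smul_mul_assoc, hG, mul_assoc] at hderiv

theorem eq_of_eq_at (hA : Continuous A) (hX : IsLinearSolution A X) (hY : IsLinearSolution A Y)
    {t₀ : ℝ} (h₀ : X t₀ = Y t₀) : X = Y := by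
  funext t
  obtain ⟨a, ha⟩ := exists_lt (min t₀ t)
  obtain ⟨b, hb⟩ := exists_gt (max t₀ t)
  rw [lt_min_iff] at ha
  rw [max_lt_iff] at hb
  obtain ⟨C, hC⟩ := (isCompact_Icc (a := a) (b := b)).exists_bound_of_continuousOn hA.continuousOn
  have hlip : ∀ s ∈ Set.Ioo a b, LipschitzOnWith C.toNNReal (fun x => A s * x) Set.univ := by
    intro s hs
    refine (LipschitzWith.of_dist_le_mul fun x y => ?_).lipschitzOnWith
    rw [dist_eq_norm, dist_eq_norm, ← mul_sub]
    refine (norm_mul_le _ _).trans (mul_le_mul_of_nonneg_right ?_ (norm_nonneg _))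
    exact (hC s (Set.Ioo_subset_Icc_self hs)).trans (Real.le_coe_toNNReal C)
  exact ODE_solution_unique_of_mem_Icc hlip ⟨ha.1, hb.1⟩
    (fun s _ => (hX s).continuousAt.continuousWithinAt) (fun s _ => hX s) (fun _ _ => trivial)
    (fun s _ => (hY s).continuousAt.continuousWithinAt) (fun s _ => hY s) (fun _ _ => trivial)
    h₀ ⟨ha.2.le, hb.2.le⟩

theorem eq_mul_inv_mul (hA : Continuous A) (hY : IsLinearSolution A Y)
    (hZ : IsLinearSolution A Z) {t₀ : ℝ} {U : 𝔸ˣ} (hU : Y t₀ = U) (t : ℝ) :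
    Z t = Y t * (↑U⁻¹ * Z t₀) := by
  have h₀ : Z t₀ = Y t₀ * (↑U⁻¹ * Z t₀) := by rw [hU, U.mul_inv_cancel_left]
  exact congrFun (hZ.eq_of_eq_at hA (hY.mul_const _) h₀) t

/-- If `Y t * C = 0`, then the solution `Y · * C` vanishes identically; so `Y t` is left regular. -/
theorem isUnit_of_isUnit_at [FiniteDimensional ℝ 𝔸] (hA : Continuous A)
    (hY : IsLinearSolution A Y) {t₀ : ℝ} (h₀ : IsUnit (Y t₀)) (t : ℝ) : IsUnit (Y t) := by
  have : IsArtinianRing 𝔸ᵐᵒᵖ := IsArtinianRing.of_finite ℝ 𝔸ᵐᵒᵖ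
  rw [IsArtinianRing.isUnit_iff_isLeftRegular, isLeftRegular_iff_right_eq_zero_of_mul]
  intro C hC
  have hzero : (fun s => Y s * C) = fun s => Y s * 0 :=
    (hY.mul_const C).eq_of_eq_at hA (hY.mul_const 0) (hC.trans (mul_zero _).symm)
  exact h₀.mul_left_cancel (congrFun hzero t₀)

theorem const_mul_apply_affine (hA : Continuous A) (hY : IsLinearSolution A Y) {U : 𝔸ˣ}
    (hU : Y 0 = U) {G : 𝔸} {c T : ℝ} (hG : ∀ s, c • (G * A (c * s + T)) = A s * G) (s : ℝ) :
    G * Y (c * s + T) = Y s * (↑U⁻¹ * (G * Y T)) := by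
  simpa only [mul_zero, zero_add] using
    hY.eq_mul_inv_mul hA (hY.const_mul_comp_affine hG) hU s

theorem pow_mul_apply_nat_mul (hA : Continuous A) (hY : IsLinearSolution A Y) {U : 𝔸ˣ}
    (hU : Y 0 = U) {F : 𝔸} {T : ℝ} (hF : ∀ s, F * A (s + T) = A s * F) (n : ℕ) :
    F ^ n * Y (n * T) = U * (↑U⁻¹ * (F * Y T)) ^ n := by
  have hshift (s : ℝ) : F * Y (s + T) = Y s * (↑U⁻¹ * (F * Y T)) := by
    simpa only [one_mul] using
      hY.const_mul_apply_affine hA hU (c := 1) (by simpa only [one_mul, one_smul] using hF) s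
  induction n with
  | zero => simp [hU]
  | succ n ih =>
    calc F ^ (n + 1) * Y ((n + 1 : ℕ) * T)
        = F ^ n * (F * Y (n * T + T)) := by
          rw [pow_succ, mul_assoc, Nat.cast_succ, add_mul, one_mul]
      _ = U * (↑U⁻¹ * (F * Y T)) ^ (n + 1) := by
          rw [hshift, ← mul_assoc, ih, mul_assoc, pow_succ]

theorem apply_two_mul_of_reversing (hA : Continuous A) (hY : IsLinearSolution A Y) {τ : ℝ}
    {U B : 𝔸ˣ} (hU : Y 0 = U) (hB : Y τ = B) {R R' : 𝔸} (hRR : R' * R = 1)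
    (hR : ∀ s, R * A (-s + 2 * τ) = -(A s * R)) :
    Y (2 * τ) = R' * U * ↑B⁻¹ * R * B := by
  have hmid : R * (B : 𝔸) = B * (↑U⁻¹ * (R * Y (2 * τ))) := by
    have h := hY.const_mul_apply_affine hA hU (G := R) (c := -1) (T := 2 * τ)
      (fun s => by rw [neg_one_mul, hR, neg_one_smul, neg_neg]) τ
    rwa [show -1 * τ + 2 * τ = τ by ring, hB] at h
  calc Y (2 * τ) = R' * (R * Y (2 * τ)) := by rw [← mul_assoc, hRR, one_mul]
    _ = R' * (U * (↑B⁻¹ * (R * B))) := by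
      rw [hmid, B.inv_mul_cancel_left, U.mul_inv_cancel_left]
    _ = R' * U * ↑B⁻¹ * R * B := by simp only [mul_assoc]

theorem monodromy_eq_mul_pow_mul_inv (hA : Continuous A) (hX : IsLinearSolution A X)
    (hX0 : X 0 = 1) (hY : IsLinearSolution A Y) {τ : ℝ} {U B : 𝔸ˣ} (hU : Y 0 = U) (hB : Y τ = B)
    {F R R' : 𝔸} {N : ℕ} (hFN : F ^ N = 1) (hF : ∀ s, F * A (s + 2 * τ) = A s * F)
    (hRR : R' * R = 1) (hR : ∀ s, R * A (-s + 2 * τ) = -(A s * R)) :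
    X (N * (2 * τ)) = U * (↑U⁻¹ * F * R' * U * ↑B⁻¹ * R * B) ^ N * ↑U⁻¹ := by
  have hW : ↑U⁻¹ * (F * Y (2 * τ)) = ↑U⁻¹ * F * R' * U * ↑B⁻¹ * R * B := by
    simp only [hY.apply_two_mul_of_reversing hA hU hB hRR hR, mul_assoc]
  calc X (N * (2 * τ))
      = Y (N * (2 * τ)) * ↑U⁻¹ := by rw [hY.eq_mul_inv_mul hA hX hU, hX0, mul_one]
    _ = F ^ N * Y (N * (2 * τ)) * ↑U⁻¹ := by rw [hFN, one_mul]
    _ = U * (↑U⁻¹ * F * R' * U * ↑B⁻¹ * R * B) ^ N * ↑U⁻¹ := by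
      rw [hY.pow_mul_apply_nat_mul hA hU hF, hW]

end IsLinearSolution

end LinearEquation

theorem fderiv_fderiv_apply_of_comp_eq {E G : Type*} [NormedAddCommGroup E] [NormedSpace ℝ E]
    [NormedAddCommGroup G] [NormedSpace ℝ G] {f : E → G} (hf : ContDiff ℝ 2 f) {L : E →L[ℝ] E}
    (hL : ∀ x, f (L x) = f x) (x u v : E) :
    fderiv ℝ (fderiv ℝ f) x u v = fderiv ℝ (fderiv ℝ f) (L x) (L u) (L v) := by
  have h := congrArg (fun D => D ![u, v]) (L.iteratedFDeriv_comp_right hf x (i := 2) le_rfl)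
  rw [show f ∘ L = f from funext hL] at h
  simpa [iteratedFDeriv_two_apply] using h

theorem hasDerivAt_matrix {m n : Type*} [Finite m] [Finite n] {M : ℝ → Matrix m n ℝ}
    {M' : Matrix m n ℝ} {s : ℝ} :
    HasDerivAt M M' s ↔ ∀ i j, HasDerivAt (fun u => M u i j) (M' i j) s := by
  have := Fintype.ofFinite m
  have := Fintype.ofFinite n
  exact hasDerivAt_pi.trans <| forall_congr' fun _ => hasDerivAt_pi

section VariationalEquation

variable {ι : Type*} [Fintype ι] [DecidableEq ι] {f : (ι → ℝ) → ℝ}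

/-- The Hessian matrix of `f` at `x`: the matrix of its second Fréchet derivative, as a bilinear
form, in the standard basis of `ℝ^ι`. -/
noncomputable def hessianMatrix (f : (ι → ℝ) → ℝ) (x : ι → ℝ) : Matrix ι ι ℝ :=
  LinearMap.toMatrix₂' ℝ (fderiv ℝ (fderiv ℝ f) x).toLinearMap₁₂

theorem continuous_hessianMatrix (hf : ContDiff ℝ 2 f) : Continuous (hessianMatrix f) := by
  have hdf : ContDiff ℝ 1 (fderiv ℝ f) := hf.fderiv_right (by norm_num)
  have hddf : Continuous (fderiv ℝ (fderiv ℝ f)) := hdf.continuous_fderiv one_ne_zero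
  refine continuous_matrix fun i j => ?_
  simp only [hessianMatrix, LinearMap.toMatrix₂'_apply,
    ContinuousLinearMap.toLinearMap₁₂_apply_apply_apply]
  exact (hddf.clm_apply continuous_const).clm_apply continuous_const

theorem hessianMatrix_eq_transpose_mul_mul (hf : ContDiff ℝ 2 f) {S : Matrix ι ι ℝ}
    (hS : ∀ x, f (S *ᵥ x) = f x) (x : ι → ℝ) :
    hessianMatrix f x = Sᵀ * hessianMatrix f (S *ᵥ x) * S := by
  have hbilin : (fderiv ℝ (fderiv ℝ f) x).toLinearMap₁₂ =
      (fderiv ℝ (fderiv ℝ f) (S *ᵥ x)).toLinearMap₁₂.compl₁₂ (toLin' S) (toLin' S) :=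
    LinearMap.ext₂ fun u v =>
      fderiv_fderiv_apply_of_comp_eq hf (L := (toLin' S).toContinuousLinearMap) hS x u v
  rw [hessianMatrix, hbilin, LinearMap.toMatrix₂'_compl₁₂, LinearMap.toMatrix'_toLin',
    ← hessianMatrix]

/-- The sign `c = 1` is that of a symmetry of the Hamiltonian flow, `c = -1` that of a
time-reversing one. -/
theorem smul_transpose_mul_hessianMatrix (hf : ContDiff ℝ 2 f) {J S : Matrix ι ι ℝ} {c : ℝ}
    (hS : S ∈ orthogonalGroup ι ℝ) (hJ : S * J = c • (J * S)) (hfS : ∀ x, f (S *ᵥ x) = f x)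
    (x : ι → ℝ) :
    c • (Sᵀ * (J * hessianMatrix f (S *ᵥ x))) = J * hessianMatrix f x * Sᵀ := by
  have hSt : S * Sᵀ = 1 := (mem_orthogonalGroup_iff _ _).1 hS
  have hJt : J * Sᵀ = c • (Sᵀ * J) := by
    calc J * Sᵀ = Sᵀ * (S * J) * Sᵀ := by
          rw [← mul_assoc Sᵀ, (mem_orthogonalGroup_iff' _ _).1 hS, one_mul]
      _ = c • (Sᵀ * J * (S * Sᵀ)) := by
          rw [hJ, mul_smul_comm, smul_mul_assoc]; simp only [mul_assoc]
      _ = c • (Sᵀ * J) := by rw [hSt, mul_one]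
  calc c • (Sᵀ * (J * hessianMatrix f (S *ᵥ x)))
      = J * Sᵀ * hessianMatrix f (S *ᵥ x) * (S * Sᵀ) := by
        rw [hSt, mul_one, hJt, smul_mul_assoc, mul_assoc]
    _ = J * hessianMatrix f x * Sᵀ := by
        rw [hessianMatrix_eq_transpose_mul_mul hf hfS x]; simp only [mul_assoc]

open scoped Matrix.Norms.Operator in
theorem monodromy_factorization_general {J F R : Matrix ι ι ℝ}
    (hF : F ∈ orthogonalGroup ι ℝ) (hFJ : F * J = J * F) {N : ℕ} (hFN : F ^ N = 1)
    (hR : R ∈ orthogonalGroup ι ℝ) (hRJ : R * J = -(J * R))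
    {Γ : (ι → ℝ) → ℝ} (hΓ : ContDiff ℝ 2 Γ)
    (hΓF : ∀ x, Γ (F *ᵥ x) = Γ x) (hΓR : ∀ x, Γ (R *ᵥ x) = Γ x)
    {γ : ℝ → ι → ℝ} (hγ : Continuous γ) {τ : ℝ}
    (hγF : ∀ s, γ (s + 2 * τ) = F *ᵥ γ s) (hγR : ∀ s, γ (-s + 2 * τ) = R *ᵥ γ s)
    {Y : ℝ → Matrix ι ι ℝ} (hY0 : IsUnit (Y 0))
    (hY : ∀ s i j, HasDerivAt (fun u => Y u i j) ((J * hessianMatrix Γ (γ s) * Y s) i j) s)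
    {X : ℝ → Matrix ι ι ℝ} (hX0 : X 0 = 1)
    (hX : ∀ s i j, HasDerivAt (fun u => X u i j) ((J * hessianMatrix Γ (γ s) * X s) i j) s) :
    X (N * (2 * τ)) =
      Y 0 * ((Y 0)⁻¹ * Fᵀ * R * Y 0 * (Y τ)⁻¹ * Rᵀ * Y τ) ^ N * (Y 0)⁻¹ := by
  have hA : Continuous fun s => J * hessianMatrix Γ (γ s) :=
    continuous_const.mul ((continuous_hessianMatrix hΓ).comp hγ)
  have hYsol : IsLinearSolution _ Y := fun s => hasDerivAt_matrix.2 (hY s)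
  have hXsol : IsLinearSolution _ X := fun s => hasDerivAt_matrix.2 (hX s)
  obtain ⟨B, hB⟩ := hYsol.isUnit_of_isUnit_at hA hY0 τ
  obtain ⟨U, hU⟩ := hY0
  have hAF (s : ℝ) : Fᵀ * (J * hessianMatrix Γ (γ (s + 2 * τ))) =
      J * hessianMatrix Γ (γ s) * Fᵀ := by
    simpa only [hγF, one_smul] using smul_transpose_mul_hessianMatrix hΓ hF
      (c := 1) (by rw [hFJ, one_smul]) hΓF (γ s)
  have hAR (s : ℝ) : Rᵀ * (J * hessianMatrix Γ (γ (-s + 2 * τ))) =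
      -(J * hessianMatrix Γ (γ s) * Rᵀ) := by
    rw [hγR, ← smul_transpose_mul_hessianMatrix hΓ hR (c := -1) (by rw [hRJ, neg_one_smul]) hΓR,
      neg_one_smul, neg_neg]
  rw [← hU, ← hB, ← coe_units_inv, ← coe_units_inv]
  exact hXsol.monodromy_eq_mul_pow_mul_inv hA hX0 hYsol hU.symm hB.symm
    (by rw [← transpose_pow, hFN, transpose_one]) hAF ((mem_orthogonalGroup_iff _ _).1 hR) hAR

end VariationalEquation

theorem hessM_eq_hessianMatrix {f : (Fin 6 → ℝ) → ℝ} (hf : ContDiff ℝ 2 f) :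
    hessM f = hessianMatrix f := by
  have hdf : Differentiable ℝ (fderiv ℝ f) :=
    (hf.fderiv_right (m := 1) (by norm_num)).differentiable one_ne_zero
  ext x i j
  simp [hessM, hessianMatrix, LinearMap.toMatrix₂'_apply,
    fderiv_clm_apply (hdf x) (differentiableAt_const _)]

theorem Sf_mem_orthogonalGroup : Sf ∈ orthogonalGroup (Fin 6) ℝ := by
  rw [mem_orthogonalGroup_iff]
  ext i j
  fin_cases i <;> fin_cases j <;> simp [Sf, mul_apply, Fin.sum_univ_succ]

theorem Sf_mul_J6 : Sf * J6 = J6 * Sf := by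
  ext i j
  fin_cases i <;> fin_cases j <;> simp [Sf, J6, mul_apply, Fin.sum_univ_succ]

theorem Sf_pow_three : Sf ^ 3 = -1 := by
  rw [pow_succ, pow_two]
  ext i j
  fin_cases i <;> fin_cases j <;> simp [Sf, mul_apply, Fin.sum_univ_succ]

theorem Sf_pow_six : Sf ^ 6 = 1 := by
  calc Sf ^ 6 = (Sf ^ 3) ^ 2 := pow_mul Sf 3 2
    _ = 1 := by rw [Sf_pow_three, neg_one_sq]

theorem transpose_Sr : Srᵀ = Sr := by
  ext i j
  fin_cases i <;> fin_cases j <;> simp [Sr]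

theorem Sr_mem_orthogonalGroup : Sr ∈ orthogonalGroup (Fin 6) ℝ := by
  rw [mem_orthogonalGroup_iff, transpose_Sr]
  ext i j
  fin_cases i <;> fin_cases j <;> simp [Sr, mul_apply, Fin.sum_univ_succ]

theorem Sr_mul_J6 : Sr * J6 = -(J6 * Sr) := by
  ext i j
  fin_cases i <;> fin_cases j <;> simp [Sr, J6, mul_apply, Fin.sum_univ_succ]

/-- Factorization of the monodromy matrix of the cubic orbit: with `B = Y(τ)` and
`W = Y₀⁻¹ S_fᵀ S_r Y₀ B⁻¹ S_r B`, the monodromy matrix satisfies `X(12τ) = Y₀ W⁶ Y₀⁻¹`. -/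
theorem monodromy_factorization (τ : ℝ) (hτ : 0 < τ)
    (Γ : (Fin 6 → ℝ) → ℝ) (hΓ : ContDiff ℝ 2 Γ)
    (hΓf : ∀ x, Γ (Sf.mulVec x) = Γ x)
    (hΓr : ∀ x, Γ (Sr.mulVec x) = Γ x)
    (γ : ℝ → Fin 6 → ℝ)
    (hsol : ∀ s : ℝ, HasDerivAt γ (J6.mulVec (gradV Γ (γ s))) s)
    (hper : ∀ s : ℝ, γ (s + 12 * τ) = γ s)
    (hsymf : ∀ s : ℝ, γ (s + 2 * τ) = Sf.mulVec (γ s))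
    (hsymr : ∀ s : ℝ, γ (-s + 2 * τ) = Sr.mulVec (γ s))
    (Y₀ : Matrix (Fin 6) (Fin 6) ℝ) (hY₀ : IsUnit Y₀)
    (Y : ℝ → Matrix (Fin 6) (Fin 6) ℝ)
    (hY0 : Y 0 = Y₀)
    (hY : ∀ (s : ℝ) (i j : Fin 6),
      HasDerivAt (fun u => Y u i j) ((J6 * hessM Γ (γ s) * Y s) i j) s)
    (X : ℝ → Matrix (Fin 6) (Fin 6) ℝ)
    (hX0 : X 0 = 1)
    (hX : ∀ (s : ℝ) (i j : Fin 6),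
      HasDerivAt (fun u => X u i j) ((J6 * hessM Γ (γ s) * X s) i j) s) :
    X (12 * τ) =
      Y₀ * (Y₀⁻¹ * Sfᵀ * Sr * Y₀ * (Y τ)⁻¹ * Sr * Y τ) ^ 6 * Y₀⁻¹ := by
  subst hY0
  simp only [hessM_eq_hessianMatrix hΓ] at hY hX
  have hγ : Continuous γ := continuous_iff_continuousAt.2 fun s => (hsol s).continuousAt
  have h := monodromy_factorization_general Sf_mem_orthogonalGroup Sf_mul_J6 Sf_pow_six
    Sr_mem_orthogonalGroup Sr_mul_J6 hΓ hΓf hΓr hγ hsymf hsymr hY₀ hY hX0 hX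
  rwa [transpose_Sr, show ((6 : ℕ) : ℝ) * (2 * τ) = 12 * τ by push_cast; ring] at h
end

section
/- Let δ = √2/2 and let Y₀ be the 6×6 matrix with rows (1,0,0,0,0,0), (0,0,−δ,0,δ,0), (0,0,δ,0,δ,0), (0,0,0,1,0,0), (0,−δ,0,0,0,−δ), (0,−δ,0,0,0,δ). Then for every real 6×6 symplectic matrix B, the matrix W = Y₀⁻¹ S_fᵀ S_r Y₀ B⁻¹ S_r B satisfies: there exists a real 3×3 matrix K with ½(W + W⁻¹) = [[Kᵀ, 0],[0, K]] in 3×3 blocks. In particular, −Y₀⁻¹ S_fᵀ S_r Y₀ = Λ, where Λ = [[I, 0],[0, −I]] in 3×3 blocks. -/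
open Matrix

/-!
Put `Λ = diag(I, -I)`. The columns of the orthogonal matrix `Y₀` diagonalise `S_fᵀ S_r`, so that
`Y₀⁻¹ S_fᵀ S_r Y₀ = -Λ` and `W = -ΛD` with `D = B⁻¹ S_r B`. Both `Λ` and `D` are involutions, hence
`W⁻¹ = -DΛ`, and the anticommutator `ΛD + DΛ` only retains the diagonal blocks of `D`. As `S_r` is
skew-adjoint for the symplectic form (it is an antisymplectic involution), so is its symplectic
conjugate `D`; this makes its two diagonal blocks negative transposes of each other.
-/

section Conjugation

variable {n R : Type*} [Fintype n] [DecidableEq n] [CommRing R] {J P S T : Matrix n n R}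

lemma isSkewAdjoint_inv_mul_mul (hP : IsUnit P) (hPJ : Pᵀ * J * P = J) (hS : J.IsSkewAdjoint S) :
    J.IsSkewAdjoint (P⁻¹ * S * P) := by
  have hconj : P * (P⁻¹ * S * P) * P⁻¹ = S := by
    have hdet := P.isUnit_iff_isUnit_det.mp hP
    rw [mul_assoc P⁻¹, mul_nonsing_inv_cancel_left _ _ hdet, mul_nonsing_inv_cancel_right _ _ hdet]
  have h := isAdjointPair_equiv J (P⁻¹ * S * P) (-(P⁻¹ * S * P)) P hP
  rw [hPJ, mul_neg, neg_mul, hconj] at h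
  exact h.mpr hS

lemma inv_mul_mul_mul_self_eq_one (hP : IsUnit P) (hS : S * S = 1) :
    P⁻¹ * S * P * (P⁻¹ * S * P) = 1 := by
  have hdet := P.isUnit_iff_isUnit_det.mp hP
  calc P⁻¹ * S * P * (P⁻¹ * S * P) = P⁻¹ * S * (P * (P⁻¹ * (S * P))) := by simp only [mul_assoc]
    _ = P⁻¹ * (S * S) * P := by
      rw [mul_nonsing_inv_cancel_left _ _ hdet]; simp only [mul_assoc]
    _ = 1 := by rw [hS, mul_one, nonsing_inv_mul _ hdet]

lemma mul_inv_eq_mul_of_mul_self_eq_one (hS : S * S = 1) (hT : T * T = 1) : (S * T)⁻¹ = T * S := by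
  rw [Matrix.mul_inv_rev, inv_eq_left_inv hS, inv_eq_left_inv hT]

end Conjugation

section Blocks

variable {l R : Type*} [Fintype l] [DecidableEq l] [CommRing R]

lemma isSkewAdjoint_J_fromBlocks_iff {A B C D : Matrix l l R} :
    (J l R).IsSkewAdjoint (fromBlocks A B C D) ↔ A = -Dᵀ ∧ Bᵀ = B ∧ Cᵀ = C := by
  have hA : -Aᵀ = D ↔ A = -Dᵀ := by
    rw [neg_eq_iff_eq_neg, ← transpose_inj, transpose_transpose, transpose_neg]
  have hD : Dᵀ = -A ↔ A = -Dᵀ := by rw [eq_comm, neg_eq_iff_eq_neg]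
  simp only [Matrix.IsSkewAdjoint, Matrix.IsAdjointPair, J, fromBlocks_transpose,
    fromBlocks_multiply, fromBlocks_neg, fromBlocks_inj, mul_zero, mul_one, mul_neg, zero_mul,
    one_mul, neg_mul, neg_neg, neg_zero, neg_inj, zero_add, add_zero, hA, hD]
  tauto

lemma isSkewAdjoint_J_fromBlocks_neg {A : Matrix l l R} (hA : Aᵀ = A) :
    (J l R).IsSkewAdjoint (fromBlocks A 0 0 (-A)) := by
  simp [isSkewAdjoint_J_fromBlocks_iff, hA]

lemma fromBlocks_neg_mul_self {A : Matrix l l R} (hA : A * A = 1) :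
    fromBlocks A 0 0 (-A) * fromBlocks A 0 0 (-A) = 1 := by
  simp [fromBlocks_multiply, hA]

variable (l R) in
/-- The matrix `Λ = [[I, 0], [0, -I]]`. -/
def blockSign : Matrix (l ⊕ l) (l ⊕ l) R :=
  fromBlocks 1 0 0 (-1)

lemma blockSign_mul_self : blockSign l R * blockSign l R = 1 :=
  fromBlocks_neg_mul_self (mul_one 1)

lemma blockSign_mul_add_mul_blockSign (D : Matrix (l ⊕ l) (l ⊕ l) R) :
    blockSign l R * D + D * blockSign l R =
      (2 : R) • fromBlocks D.toBlocks₁₁ 0 0 (-D.toBlocks₂₂) := by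
  rw [← fromBlocks_toBlocks D]
  simp [blockSign, fromBlocks_multiply, fromBlocks_add, two_smul]

theorem exists_add_inv_eq_two_smul_fromBlocks {B S : Matrix (l ⊕ l) (l ⊕ l) R}
    (hB : B ∈ symplecticGroup l R) (hS : (J l R).IsSkewAdjoint S) (hSS : S * S = 1) :
    ∃ K : Matrix l l R,
      -blockSign l R * B⁻¹ * S * B + (-blockSign l R * B⁻¹ * S * B)⁻¹ =
        (2 : R) • fromBlocks Kᵀ 0 0 K := by
  have hBu : IsUnit B := B.isUnit_iff_isUnit_det.mpr (SymplecticGroup.symplectic_det hB)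
  set D := B⁻¹ * S * B with hD
  have hDD : D * D = 1 := inv_mul_mul_mul_self_eq_one hBu hSS
  have hDJ : (J l R).IsSkewAdjoint D :=
    isSkewAdjoint_inv_mul_mul hBu (SymplecticGroup.mem_iff'.mp hB) hS
  have hblocks : D.toBlocks₁₁ = -D.toBlocks₂₂ᵀ := by
    rw [← fromBlocks_toBlocks D] at hDJ
    exact (isSkewAdjoint_J_fromBlocks_iff.mp hDJ).1
  have hΛ : -blockSign l R * -blockSign l R = 1 := by rw [neg_mul_neg, blockSign_mul_self]
  have hW : -blockSign l R * B⁻¹ * S * B = -blockSign l R * D := by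
    simp only [hD, mul_assoc]
  refine ⟨D.toBlocks₂₂, ?_⟩
  rw [hW]
  calc -blockSign l R * D + (-blockSign l R * D)⁻¹
      = -(blockSign l R * D + D * blockSign l R) := by
        rw [mul_inv_eq_mul_of_mul_self_eq_one hΛ hDD, neg_mul, mul_neg, neg_add]
    _ = (2 : R) • fromBlocks D.toBlocks₂₂ᵀ 0 0 D.toBlocks₂₂ := by
        rw [blockSign_mul_add_mul_blockSign, hblocks, ← smul_neg, fromBlocks_neg]
        simp only [neg_neg, neg_zero]

end Blocks

section Coordinates

/-- Six-by-six matrices as `2 × 2` block matrices with `3 × 3` blocks, through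
`Fin 3 ⊕ Fin 3 ≃ Fin 6`; an algebra isomorphism, so that block identities carry over to `Fin 6`. -/
abbrev ofBlocks : Matrix (Fin 3 ⊕ Fin 3) (Fin 3 ⊕ Fin 3) ℝ ≃ₐ[ℝ] Matrix (Fin 6) (Fin 6) ℝ :=
  reindexAlgEquiv ℝ ℝ finSumFinEquiv

lemma ofBlocks_transpose (M : Matrix (Fin 3 ⊕ Fin 3) (Fin 3 ⊕ Fin 3) ℝ) :
    (ofBlocks M)ᵀ = ofBlocks Mᵀ :=
  rfl

lemma ofBlocks_inv (M : Matrix (Fin 3 ⊕ Fin 3) (Fin 3 ⊕ Fin 3) ℝ) :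
    (ofBlocks M)⁻¹ = ofBlocks M⁻¹ :=
  inv_reindex _ _ M

/-- The `3 × 3` block `S` of `S_r = diag(S, -S)`. -/
def reversalBlock : Matrix (Fin 3) (Fin 3) ℝ :=
  !![0, 1, 0;
     1, 0, 0;
     0, 0, 1]

lemma reversalBlock_transpose : reversalBlockᵀ = reversalBlock := by
  ext i j; fin_cases i <;> fin_cases j <;> rfl

lemma reversalBlock_mul_self : reversalBlock * reversalBlock = 1 := by
  ext i j; fin_cases i <;> fin_cases j <;> simp [reversalBlock, mul_apply, Fin.sum_univ_succ]

lemma Sr_eq_ofBlocks : Sr = ofBlocks (fromBlocks reversalBlock 0 0 (-reversalBlock)) := by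
  have hneg : -reversalBlock = !![0, -1, 0; -1, 0, 0; 0, 0, -1] := by simp [reversalBlock]
  rw [hneg]
  ext i j; fin_cases i <;> fin_cases j <;> rfl

lemma J6_eq_ofBlocks : J6 = ofBlocks (-J (Fin 3) ℝ) := by
  have hneg : -(1 : Matrix (Fin 3) (Fin 3) ℝ) = !![-1, 0, 0; 0, -1, 0; 0, 0, -1] := by
    simp [one_fin_three]
  rw [J, fromBlocks_neg, neg_neg, neg_zero, hneg]
  ext i j; fin_cases i <;> fin_cases j <;> rfl

lemma ofBlocks_blockSign : ofBlocks (blockSign (Fin 3) ℝ) = diagonal ![1, 1, 1, -1, -1, -1] := by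
  rw [blockSign, ← diagonal_one, diagonal_neg, fromBlocks_diagonal, coe_reindexAlgEquiv,
    reindex_apply, submatrix_diagonal_equiv]
  congr 1
  ext i
  fin_cases i <;> rfl

lemma ofBlocks_transpose_mul_J6_mul_iff {B : Matrix (Fin 3 ⊕ Fin 3) (Fin 3 ⊕ Fin 3) ℝ} :
    (ofBlocks B)ᵀ * J6 * ofBlocks B = J6 ↔ B ∈ symplecticGroup (Fin 3) ℝ := by
  rw [J6_eq_ofBlocks, ofBlocks_transpose, ← map_mul, ← map_mul, ofBlocks.injective.eq_iff, mul_neg,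
    neg_mul, neg_inj, SymplecticGroup.mem_iff']

/-- The matrix `Y₀` with the scale `δ` left free. Its columns are eigenvectors of `S_fᵀ S_r` for
every `δ ≠ 0`; the value of `δ` only serves to normalise them. -/
def eigenframe (δ : ℝ) : Matrix (Fin 6) (Fin 6) ℝ :=
  !![1, 0, 0, 0, 0, 0;
     0, 0, -δ, 0, δ, 0;
     0, 0, δ, 0, δ, 0;
     0, 0, 0, 1, 0, 0;
     0, -δ, 0, 0, 0, -δ;
     0, -δ, 0, 0, 0, δ]

lemma eigenframe_transpose_mul_self {δ : ℝ} (hδ : δ * δ = 1 / 2) :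
    (eigenframe δ)ᵀ * eigenframe δ = 1 := by
  ext i j
  fin_cases i <;> fin_cases j <;> norm_num [eigenframe, mul_apply, Fin.sum_univ_succ, hδ]

lemma Sf_transpose_mul_Sr_mul_eigenframe (δ : ℝ) :
    Sfᵀ * Sr * eigenframe δ = eigenframe δ * -ofBlocks (blockSign (Fin 3) ℝ) := by
  rw [ofBlocks_blockSign]
  ext i j
  rw [mul_neg, neg_apply, mul_diagonal]
  fin_cases i <;> fin_cases j <;> simp [eigenframe, Sf, Sr, mul_apply, Fin.sum_univ_succ]

lemma eigenframe_inv_mul_mul_eigenframe {δ : ℝ} (hδ : δ * δ = 1 / 2) :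
    (eigenframe δ)⁻¹ * Sfᵀ * Sr * eigenframe δ = -ofBlocks (blockSign (Fin 3) ℝ) := by
  have hdet : IsUnit (eigenframe δ).det :=
    isUnit_det_of_left_inverse (eigenframe_transpose_mul_self hδ)
  rw [mul_assoc, mul_assoc, ← mul_assoc Sfᵀ, Sf_transpose_mul_Sr_mul_eigenframe,
    nonsing_inv_mul_cancel_left _ _ hdet]

theorem exists_half_smul_add_inv_eq_ofBlocks {B W : Matrix (Fin 6) (Fin 6) ℝ}
    (hB : Bᵀ * J6 * B = J6) (hW : W = -ofBlocks (blockSign (Fin 3) ℝ) * B⁻¹ * Sr * B) :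
    ∃ K : Matrix (Fin 3) (Fin 3) ℝ,
      (1 / 2 : ℝ) • (W + W⁻¹) = ofBlocks (fromBlocks Kᵀ 0 0 K) := by
  obtain ⟨B, rfl⟩ := ofBlocks.surjective B
  obtain ⟨K, hK⟩ := exists_add_inv_eq_two_smul_fromBlocks
    (ofBlocks_transpose_mul_J6_mul_iff.mp hB)
    (isSkewAdjoint_J_fromBlocks_neg reversalBlock_transpose)
    (fromBlocks_neg_mul_self reversalBlock_mul_self)
  refine ⟨K, ?_⟩
  rw [hW, Sr_eq_ofBlocks, ofBlocks_inv]
  simp only [← map_neg, ← map_mul]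
  rw [ofBlocks_inv, ← map_add, hK, map_smul, smul_smul, one_div_mul_cancel two_ne_zero, one_smul]

end Coordinates

/-- With `δ = √2/2` and the specific orthogonal matrix `Y₀` below, for every real symplectic
matrix `B` the matrix `W = Y₀⁻¹ S_fᵀ S_r Y₀ B⁻¹ S_r B` satisfies
`½(W + W⁻¹) = [[Kᵀ, 0],[0, K]]` in `3 × 3` blocks for some real `3 × 3` matrix `K`;
in particular `−Y₀⁻¹ S_fᵀ S_r Y₀ = Λ` where `Λ = [[I, 0],[0, −I]]`. -/
theorem Y0_gives_W_form (δ : ℝ) (hδ : δ = Real.sqrt 2 / 2)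
    (Y₀ : Matrix (Fin 6) (Fin 6) ℝ)
    (hY₀ : Y₀ = !![1, 0, 0, 0, 0, 0;
                   0, 0, -δ, 0, δ, 0;
                   0, 0, δ, 0, δ, 0;
                   0, 0, 0, 1, 0, 0;
                   0, -δ, 0, 0, 0, -δ;
                   0, -δ, 0, 0, 0, δ]) :
    (∀ B : Matrix (Fin 6) (Fin 6) ℝ, Bᵀ * J6 * B = J6 →
      ∃ K : Matrix (Fin 3) (Fin 3) ℝ,
        (1 / 2 : ℝ) • ((Y₀⁻¹ * Sfᵀ * Sr * Y₀ * B⁻¹ * Sr * B) +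
            (Y₀⁻¹ * Sfᵀ * Sr * Y₀ * B⁻¹ * Sr * B)⁻¹) =
          (Matrix.fromBlocks Kᵀ 0 0 K).submatrix
            ((finSumFinEquiv (m := 3) (n := 3)).symm : Fin (3 + 3) → Fin 3 ⊕ Fin 3)
            (finSumFinEquiv (m := 3) (n := 3)).symm) ∧
    -(Y₀⁻¹ * Sfᵀ * Sr * Y₀) =
      (Matrix.fromBlocks (1 : Matrix (Fin 3) (Fin 3) ℝ) 0 0 (-1)).submatrix
        ((finSumFinEquiv (m := 3) (n := 3)).symm : Fin (3 + 3) → Fin 3 ⊕ Fin 3)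
        (finSumFinEquiv (m := 3) (n := 3)).symm := by
  have hδ2 : δ * δ = 1 / 2 := by
    have h2 : √2 * √2 = (2 : ℝ) := Real.mul_self_sqrt zero_le_two
    rw [hδ]
    linarith
  have hΛ := eigenframe_inv_mul_mul_eigenframe hδ2
  change Y₀ = eigenframe δ at hY₀
  rw [hY₀, hΛ]
  exact ⟨fun B hB => exists_half_smul_add_inv_eq_ofBlocks hB rfl, neg_neg _⟩
end

section
/- Let Γ : ℝ⁶ → ℝ be twice continuously differentiable, let γ be a solution of ẋ = J∇Γ(x) whose derivative γ′ is differentiable, let Y₀ be an orthogonal 6×6 matrix, and let Y : ℝ → M₆(ℝ) satisfy Y′(s) = J·D²Γ(γ(s))·Y(s) with Y(0) = Y₀. If γ′(0) ≠ 0 and S_fᵀ γ′(2τ) = γ′(0) for some τ > 0, then the vector v = Y₀ᵀ γ′(0) satisfies W v = v, where W = Y₀ᵀ S_fᵀ Y(2τ); that is, v is an eigenvector of W with eigenvalue 1. -/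
open Matrix

/-!
The velocity `γ'` of a trajectory solves the linearization of the flow along `γ`, and so does
`Y(s) v` for every vector `v`. For `v = Y₀⁻¹ γ'(0) = Y₀ᵀ γ'(0)` the two agree at time `0`, hence, by
uniqueness for linear equations, at all times: `Y(2τ) v = γ'(2τ)`. Then `S_fᵀ` carries `γ'(2τ)` back
to `γ'(0)`, and `Y₀ᵀ` carries that to `v`.
-/

section LinearODE

variable {E : Type*} [NormedAddCommGroup E] [NormedSpace ℝ E]

theorem eq_of_isIntegralCurve_linear {A : ℝ → E →L[ℝ] E} (hA : Continuous A) {f g : ℝ → E}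
    (hf : IsIntegralCurve f fun t => A t) (hg : IsIntegralCurve g fun t => A t) {t₀ : ℝ}
    (h₀ : f t₀ = g t₀) : f = g := by
  ext t
  obtain ⟨a, ha⟩ := exists_lt (min t₀ t)
  obtain ⟨b, hb⟩ := exists_gt (max t₀ t)
  rw [lt_min_iff] at ha
  rw [max_lt_iff] at hb
  obtain ⟨C, hC⟩ := isCompact_Icc.exists_bound_of_continuousOn (hA.continuousOn (s := Set.Icc a b))
  have lipschitz_on : ∀ s ∈ Set.Ioo a b, LipschitzOnWith C.toNNReal (A s) Set.univ := fun s hs =>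
    ((A s).lipschitz.weaken <|
      NNReal.le_toNNReal_of_coe_le (hC s (Set.Ioo_subset_Icc_self hs))).lipschitzOnWith
  exact ODE_solution_unique_of_mem_Ioo lipschitz_on ⟨ha.1, hb.1⟩
    (fun s _ => ⟨hf s, Set.mem_univ _⟩) (fun s _ => ⟨hg s, Set.mem_univ _⟩) h₀ ⟨ha.2, hb.2⟩

variable {F : E → E} {γ : ℝ → E}

theorem isIntegralCurve_deriv (hF : ∀ s, DifferentiableAt ℝ F (γ s))
    (hγ : IsIntegralCurve γ fun _ => F) :
    IsIntegralCurve (deriv γ) fun s => fderiv ℝ F (γ s) := by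
  intro s
  have velocity : deriv γ = F ∘ γ := funext fun t => (hγ t).deriv
  rw [velocity]
  exact (hF s).hasFDerivAt.comp_hasDerivAt s (hγ s)

theorem eq_deriv_of_isIntegralCurve_fderiv (hF : ∀ s, ContDiffAt ℝ 1 F (γ s))
    (hγ : IsIntegralCurve γ fun _ => F) {f : ℝ → E}
    (hf : IsIntegralCurve f fun s => fderiv ℝ F (γ s)) {t₀ : ℝ} (h₀ : f t₀ = deriv γ t₀) :
    f = deriv γ := by
  have continuous_fderiv : Continuous fun s => fderiv ℝ F (γ s) :=
    continuous_iff_continuousAt.2 fun s =>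
      ((hF s).fderiv_right (m := 0) (by norm_num)).continuousAt.comp (hγ s).continuousAt
  exact eq_of_isIntegralCurve_linear continuous_fderiv hf
    (isIntegralCurve_deriv (fun s => (hF s).differentiableAt one_ne_zero) hγ) h₀

end LinearODE

theorem hasDerivAt_mulVec {𝕜 𝔸 m n : Type*} [NontriviallyNormedField 𝕜] [NormedRing 𝔸]
    [NormedAlgebra 𝕜 𝔸] [Finite m] [Fintype n] {Y : 𝕜 → Matrix m n 𝔸} {Y' : Matrix m n 𝔸} {s : 𝕜}
    (hY : ∀ i j, HasDerivAt (fun u => Y u i j) (Y' i j) s) (v : n → 𝔸) :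
    HasDerivAt (fun u => Y u *ᵥ v) (Y' *ᵥ v) s := by
  have := Fintype.ofFinite m
  exact hasDerivAt_pi.2 fun i => HasDerivAt.fun_sum fun j _ => (hY i j).mul_const (v j)

section Hamiltonian

variable {Γ : (Fin 6 → ℝ) → ℝ} {x : Fin 6 → ℝ}

theorem contDiffAt_gradV {k n : WithTop ℕ∞} (hΓ : ContDiffAt ℝ n Γ x) (hk : k + 1 ≤ n) :
    ContDiffAt ℝ k (gradV Γ) x :=
  contDiffAt_pi.2 fun _ => (hΓ.fderiv_right hk).clm_apply contDiffAt_const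

theorem hessM_isSymm (hΓ : ContDiffAt ℝ 2 Γ x) : (hessM Γ x).IsSymm := by
  have hessM_apply (i j : Fin 6) :
      hessM Γ x i j = fderiv ℝ (fderiv ℝ Γ) x (Pi.single i 1) (Pi.single j 1) := by
    have differentiable_fderiv : DifferentiableAt ℝ (fderiv ℝ Γ) x :=
      (hΓ.fderiv_right (m := 1) (by norm_num)).differentiableAt one_ne_zero
    simp [hessM, fderiv_clm_apply differentiable_fderiv]
  ext i j
  rw [transpose_apply, hessM_apply, hessM_apply]
  exact hΓ.isSymmSndFDerivAt (by simp) _ _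

theorem fderiv_gradV_apply (hgrad : DifferentiableAt ℝ (gradV Γ) x) (w : Fin 6 → ℝ) :
    fderiv ℝ (gradV Γ) x w = (hessM Γ x)ᵀ *ᵥ w := by
  have fderiv_single (i j : Fin 6) :
      fderiv ℝ (gradV Γ) x (Pi.single i 1) j = hessM Γ x i j :=
    (DFunLike.congr_fun (fderiv_apply hgrad j) (Pi.single i 1)).symm
  ext j
  conv_lhs => rw [pi_eq_sum_univ' w]
  simp [fderiv_single, mulVec, dotProduct, mul_comm]

theorem contDiffAt_mulVec_gradV {m : Type*} [Fintype m] (J : Matrix m (Fin 6) ℝ)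
    {k n : WithTop ℕ∞} (hΓ : ContDiffAt ℝ n Γ x) (hk : k + 1 ≤ n) :
    ContDiffAt ℝ k (fun y => J *ᵥ gradV Γ y) x :=
  J.mulVecLin.toContinuousLinearMap.contDiff.contDiffAt.comp x (contDiffAt_gradV hΓ hk)

theorem fderiv_mulVec_gradV_apply {m : Type*} [Finite m] (J : Matrix m (Fin 6) ℝ)
    (hΓ : ContDiffAt ℝ 2 Γ x) (w : Fin 6 → ℝ) :
    fderiv ℝ (fun y => J *ᵥ gradV Γ y) x w = (J * hessM Γ x) *ᵥ w := by
  have := Fintype.ofFinite m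
  have differentiable_gradV : DifferentiableAt ℝ (gradV Γ) x :=
    (contDiffAt_gradV hΓ one_add_one_eq_two.le).differentiableAt one_ne_zero
  have chain_rule : fderiv ℝ (fun y => J *ᵥ gradV Γ y) x w = J *ᵥ fderiv ℝ (gradV Γ) x w :=
    DFunLike.congr_fun (J.mulVecLin.toContinuousLinearMap.hasFDerivAt.comp x
      differentiable_gradV.hasFDerivAt).fderiv w
  rw [chain_rule, fderiv_gradV_apply differentiable_gradV, hessM_isSymm hΓ, mulVec_mulVec]

theorem isIntegralCurve_mulVec_of_hessM {n : Type*} [Fintype n] (J : Matrix (Fin 6) (Fin 6) ℝ)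
    {γ : ℝ → Fin 6 → ℝ} (hΓ : ∀ s, ContDiffAt ℝ 2 Γ (γ s)) {Y : ℝ → Matrix (Fin 6) n ℝ}
    (hY : ∀ s i j, HasDerivAt (fun u => Y u i j) ((J * hessM Γ (γ s) * Y s) i j) s) (v : n → ℝ) :
    IsIntegralCurve (fun s => Y s *ᵥ v) fun s => fderiv ℝ (fun x => J *ᵥ gradV Γ x) (γ s) := by
  intro s
  simpa only [fderiv_mulVec_gradV_apply J (hΓ s), mulVec_mulVec] using hasDerivAt_mulVec (hY s) v

end Hamiltonian

theorem eigenvector_one_general {E G : Type*} [NormedAddCommGroup E] [NormedSpace ℝ E]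
    [AddCommGroup G] [Module ℝ G] {F : E → E} {γ : ℝ → E} (hF : ∀ s, ContDiffAt ℝ 1 F (γ s))
    (hγ : IsIntegralCurve γ fun _ => F) {Y : ℝ → G →ₗ[ℝ] E}
    (hY : ∀ v, IsIntegralCurve (fun s => Y s v) fun s => fderiv ℝ F (γ s))
    {t₀ t₁ : ℝ} {P : E →ₗ[ℝ] G} (hP : Y t₀ ∘ₗ P = .id) {S : E →ₗ[ℝ] E}
    (hS : S (deriv γ t₁) = deriv γ t₀) :
    (P ∘ₗ S ∘ₗ Y t₁) (P (deriv γ t₀)) = P (deriv γ t₀) := by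
  have transport : (fun s => Y s (P (deriv γ t₀))) = deriv γ :=
    eq_deriv_of_isIntegralCurve_fderiv hF hγ (hY _) (LinearMap.congr_fun hP _)
  calc P (S (Y t₁ (P (deriv γ t₀)))) = P (S (deriv γ t₁)) := by rw [congr_fun transport t₁]
    _ = P (deriv γ t₀) := by rw [hS]

/-- If `γ` solves `ẋ = J∇Γ(x)` with `γ′` differentiable, `Y₀` is orthogonal, `Y` solves the
linearization along `γ` with `Y(0) = Y₀`, `γ′(0) ≠ 0`, and `S_fᵀ γ′(2τ) = γ′(0)` for some
`τ > 0`, then `v = Y₀ᵀ γ′(0)` is a fixed vector (eigenvector with eigenvalue `1`) of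
`W = Y₀ᵀ S_fᵀ Y(2τ)`. -/
theorem eigenvector_one (Γ : (Fin 6 → ℝ) → ℝ) (hΓ : ContDiff ℝ 2 Γ)
    (γ : ℝ → Fin 6 → ℝ)
    (hsol : ∀ s : ℝ, HasDerivAt γ (J6.mulVec (gradV Γ (γ s))) s)
    (hγ' : Differentiable ℝ (deriv γ))
    (Y₀ : Matrix (Fin 6) (Fin 6) ℝ) (horth : Y₀ᵀ * Y₀ = 1)
    (Y : ℝ → Matrix (Fin 6) (Fin 6) ℝ)
    (hY0 : Y 0 = Y₀)
    (hY : ∀ (s : ℝ) (i j : Fin 6),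
      HasDerivAt (fun u => Y u i j) ((J6 * hessM Γ (γ s) * Y s) i j) s)
    (τ : ℝ) (hτ : 0 < τ)
    (hne : deriv γ 0 ≠ 0)
    (hrel : Sfᵀ.mulVec (deriv γ (2 * τ)) = deriv γ 0) :
    (Y₀ᵀ * Sfᵀ * Y (2 * τ)).mulVec (Y₀ᵀ.mulVec (deriv γ 0)) =
      Y₀ᵀ.mulVec (deriv γ 0) := by
  have inverse : (Y 0).mulVecLin ∘ₗ Y₀ᵀ.mulVecLin = .id := by
    rw [hY0, ← mulVecLin_mul, mul_eq_one_comm.1 horth, mulVecLin_one]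
  simpa only [LinearMap.comp_apply, mulVecLin_apply, mulVec_mulVec, Matrix.mul_assoc] using
    eigenvector_one_general (Y := fun s => (Y s).mulVecLin) (S := Sfᵀ.mulVecLin)
      (fun _ => contDiffAt_mulVec_gradV J6 hΓ.contDiffAt one_add_one_eq_two.le) hsol
      (isIntegralCurve_mulVec_of_hessM J6 (fun _ => hΓ.contDiffAt) hY) inverse hrel
end
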